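/- arXiv:1505.07529 — 2 statements merged into one kernel-verified Lean document; each statement's English description precedes it below -/
import Mathlib

section
/- For every x ∈ ℝ, the new 6-point kernel satisfies the even–odd condition: ∑_{j∈ℤ, j even} φ(x − j) = 1/2 and ∑_{j∈ℤ, j odd} φ(x − j) = 1/2. -/
/-!
Only the six shifts `j = ⌊x⌋ - k` with `-3 ≤ k < 3` contribute, and the `k`-th one contributes
`p_k` at the fractional part of `x`. Those with `k` even and those with `k` odd each add up
to `1 / 2`, because `p₋₂ + p₀ + p₂` and `p₋₃ + p₋₁ + p₁` are identically `1 / 2`: the multiples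
`-3, 2, 1` and `1, 2, -3` of `p₋₃` cancel, as do the nonconstant polynomial terms.
The parity of `⌊x⌋` only decides which of the two sums belongs to even `j`.
-/

noncomputable section

namespace IB6

/-- The special second-moment constant `K = 59/60 − √29/20`. -/
def K : ℝ := 59 / 60 - Real.sqrt 29 / 20

/-- `α = 28`. -/
def a : ℝ := 28

/-- `β(r)`. -/
def b (r : ℝ) : ℝ :=
  9 / 4 - (3 / 2) * (K + r ^ 2) * r + (22 / 3 - 7 * K) * r - (7 / 3) * r ^ 3

/-- `γ(r)`. -/
def c (r : ℝ) : ℝ :=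
  -(11 / 32) * r ^ 2 + (3 / 32) * (2 * K + r ^ 2) * r ^ 2
    + (1 / 72) * ((3 * K - 1) * r + r ^ 3) ^ 2
    + (1 / 18) * ((4 - 3 * K) * r - r ^ 3) ^ 2

/-- `p₋₃(r) = (−β(r) + √(β(r)² − 4αγ(r)))/(2α)`. -/
def pm3 (r : ℝ) : ℝ := (-b r + Real.sqrt (b r ^ 2 - 4 * a * c r)) / (2 * a)

/-- `p₋₂(r)`. -/
def pm2 (r : ℝ) : ℝ :=
  -3 * pm3 r - 1 / 16 + (K + r ^ 2) / 8 + (3 * K - 1) * r / 12 + r ^ 3 / 12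

/-- `p₋₁(r)`. -/
def pm1 (r : ℝ) : ℝ := 2 * pm3 r + 1 / 4 + (4 - 3 * K) * r / 6 - r ^ 3 / 6

/-- `p₀(r)`. -/
def p0 (r : ℝ) : ℝ := 2 * pm3 r + 5 / 8 - (K + r ^ 2) / 4

/-- `p₁(r)`. -/
def p1 (r : ℝ) : ℝ := -3 * pm3 r + 1 / 4 - (4 - 3 * K) * r / 6 + r ^ 3 / 6

/-- `p₂(r)`. -/
def p2 (r : ℝ) : ℝ :=
  pm3 r - 1 / 16 + (K + r ^ 2) / 8 - (3 * K - 1) * r / 12 - r ^ 3 / 12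

/-- The new 6-point immersed-boundary kernel `φ`. -/
def phi (x : ℝ) : ℝ :=
  if -3 ≤ x ∧ x < -2 then pm3 (x - (-3))
  else if -2 ≤ x ∧ x < -1 then pm2 (x - (-2))
  else if -1 ≤ x ∧ x < 0 then pm1 (x - (-1))
  else if 0 ≤ x ∧ x < 1 then p0 (x - 0)
  else if 1 ≤ x ∧ x < 2 then p1 (x - 1)
  else if 2 ≤ x ∧ x < 3 then p2 (x - 2)
  else 0

theorem tsum_ite_comp_sub_intCast_eq_sum {R M : Type*} [Ring R] [LinearOrder R]
    [IsOrderedRing R] [FloorRing R] [AddCommMonoid M] [TopologicalSpace M]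
    {f : R → M} {m n : ℤ} (hf : ∀ y ∉ Set.Ico (m : R) n, f y = 0)
    (P : ℤ → Prop) [DecidablePred P] (x : R) :
    (∑' j : ℤ, if P j then f (x - j) else 0) =
      ∑ k ∈ Finset.Ico m n with P (⌊x⌋ - k), f (Int.fract x + k) := by
  have sub_shift (k : ℤ) : x - ((⌊x⌋ - k : ℤ) : R) = Int.fract x + k := by
    rw [Int.cast_sub, sub_sub_eq_add_sub, add_sub_right_comm, Int.self_sub_floor]
  have eq_zero_of_notMem (k : ℤ) (hk : k ∉ Finset.Ico m n) : f (Int.fract x + k) = 0 := by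
    have floor_shift : ⌊Int.fract x + k⌋ = k := by
      rw [Int.floor_add_intCast, Int.floor_fract, zero_add]
    refine hf _ fun hmem => hk ?_
    rwa [Finset.mem_Ico, ← floor_shift, Int.le_floor, Int.floor_lt]
  rw [← (Equiv.subLeft ⌊x⌋).tsum_eq, Finset.sum_filter]
  simp only [Equiv.subLeft_apply, sub_shift]
  exact tsum_eq_sum fun k hk => by rw [eq_zero_of_notMem k hk, ite_self]

theorem phi_of_notMem_Ico {y : ℝ} (hy : y ∉ Set.Ico (-3 : ℝ) 3) : phi y = 0 := by
  grind [phi]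

theorem phi_sub_three {r : ℝ} (hr : r ∈ Set.Ico (0 : ℝ) 1) : phi (r - 3) = pm3 r := by
  grind [phi]

theorem phi_sub_two {r : ℝ} (hr : r ∈ Set.Ico (0 : ℝ) 1) : phi (r - 2) = pm2 r := by
  grind [phi]

theorem phi_sub_one {r : ℝ} (hr : r ∈ Set.Ico (0 : ℝ) 1) : phi (r - 1) = pm1 r := by
  grind [phi]

theorem phi_of_mem_Ico {r : ℝ} (hr : r ∈ Set.Ico (0 : ℝ) 1) : phi r = p0 r := by
  grind [phi]

theorem phi_add_one {r : ℝ} (hr : r ∈ Set.Ico (0 : ℝ) 1) : phi (r + 1) = p1 r := by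
  grind [phi]

theorem phi_add_two {r : ℝ} (hr : r ∈ Set.Ico (0 : ℝ) 1) : phi (r + 2) = p2 r := by
  grind [phi]

theorem pm2_add_p0_add_p2 (r : ℝ) : pm2 r + p0 r + p2 r = 1 / 2 := by
  unfold pm2 p0 p2; ring

theorem pm3_add_pm1_add_p1 (r : ℝ) : pm3 r + pm1 r + p1 r = 1 / 2 := by
  unfold pm1 p1; ring

theorem sum_even_phi_add_intCast {r : ℝ} (hr : r ∈ Set.Ico (0 : ℝ) 1) :
    ∑ k ∈ Finset.Ico (-3 : ℤ) 3 with Even k, phi (r + k) = 1 / 2 := by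
  have even_shifts : {k ∈ Finset.Ico (-3 : ℤ) 3 | Even k} = {-2, 0, 2} := by decide
  calc ∑ k ∈ Finset.Ico (-3 : ℤ) 3 with Even k, phi (r + k)
      = phi (r - 2) + phi r + phi (r + 2) := by
        simp [even_shifts, ← sub_eq_add_neg, add_assoc]
    _ = pm2 r + p0 r + p2 r := by rw [phi_sub_two hr, phi_of_mem_Ico hr, phi_add_two hr]
    _ = 1 / 2 := pm2_add_p0_add_p2 r

theorem sum_odd_phi_add_intCast {r : ℝ} (hr : r ∈ Set.Ico (0 : ℝ) 1) :
    ∑ k ∈ Finset.Ico (-3 : ℤ) 3 with Odd k, phi (r + k) = 1 / 2 := by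
  have odd_shifts : {k ∈ Finset.Ico (-3 : ℤ) 3 | Odd k} = {-3, -1, 1} := by decide
  calc ∑ k ∈ Finset.Ico (-3 : ℤ) 3 with Odd k, phi (r + k)
      = phi (r - 3) + phi (r - 1) + phi (r + 1) := by
        simp [odd_shifts, ← sub_eq_add_neg, add_assoc]
    _ = pm3 r + pm1 r + p1 r := by rw [phi_sub_three hr, phi_sub_one hr, phi_add_one hr]
    _ = 1 / 2 := pm3_add_pm1_add_p1 r

theorem tsum_ite_phi_sub_intCast (P : ℤ → Prop) [DecidablePred P] (x : ℝ) :
    (∑' j : ℤ, if P j then phi (x - j) else 0) =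
      ∑ k ∈ Finset.Ico (-3 : ℤ) 3 with P (⌊x⌋ - k), phi (Int.fract x + k) := by
  refine tsum_ite_comp_sub_intCast_eq_sum (fun y hy => ?_) P x
  exact phi_of_notMem_Ico (by simpa only [Int.cast_neg, Int.cast_ofNat] using hy)

/-- Even–odd condition: the sums of `φ(x − j)` over even `j` and over odd `j`
are each equal to `1/2`, for every `x`. -/
theorem new6pt_even_odd (x : ℝ) :
    (∑' j : ℤ, if Even j then phi (x - j) else 0) = 1 / 2 ∧
    (∑' j : ℤ, if Odd j then phi (x - j) else 0) = 1 / 2 := by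
  have fract_mem : Int.fract x ∈ Set.Ico (0 : ℝ) 1 := ⟨Int.fract_nonneg x, Int.fract_lt_one x⟩
  have even_sum := sum_even_phi_add_intCast fract_mem
  have odd_sum := sum_odd_phi_add_intCast fract_mem
  rw [tsum_ite_phi_sub_intCast, tsum_ite_phi_sub_intCast]
  rcases Int.even_or_odd ⌊x⌋ with floor_even | floor_odd
  · simp only [Int.even_sub, Int.odd_sub', floor_even, iff_true, true_iff]
    exact ⟨even_sum, odd_sum⟩
  · simp only [Int.even_sub', Int.odd_sub, floor_odd, true_iff]
    exact ⟨odd_sum, even_sum⟩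

end IB6
end
end

section
/- For every x ∈ ℝ, the new 6-point kernel satisfies the second moment condition with constant K: ∑_{j∈ℤ} (x − j)²·φ(x − j) = 59/60 − √29/20. -/
noncomputable section

namespace IB6

/-!
The coefficients `(1, -3, 2, 2, -3, 1)` of `p₋₃` in the six pieces annihilate the samples at six
consecutive points of every polynomial of degree at most two. Hence `p₋₃`, and with it the square
root, drops out of the second moment, and what is left is a polynomial identity in the fractional
part of `x` alone.
-/

open Int (fract fract_nonneg fract_lt_one self_sub_floor)

section IntegerTranslates

variable {R M : Type*} [Ring R] [LinearOrder R] [IsStrictOrderedRing R] [FloorRing R]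
  [AddCommMonoid M] [TopologicalSpace M]

theorem hasSum_sub_intCast_of_support_subset_Ico {f : R → M} {m n : ℤ}
    (hf : Function.support f ⊆ Set.Ico (m : R) n) (x : R) :
    HasSum (fun j : ℤ => f (x - j)) (∑ k ∈ Finset.Ico m n, f (fract x + k)) := by
  rw [← (Equiv.subLeft ⌊x⌋).hasSum_iff]
  have sub_floor_sub (k : ℤ) : x - ((⌊x⌋ - k : ℤ) : R) = fract x + k := by
    rw [Int.cast_sub, ← self_sub_floor]
    abel
  simp only [Function.comp_def, Equiv.subLeft_apply, sub_floor_sub]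
  refine hasSum_sum_of_ne_finset_zero fun k hk => Function.notMem_support.mp fun hfk => hk ?_
  have floor_eq : ⌊fract x + (k : R)⌋ = k := by simp
  obtain ⟨hm, hn⟩ := hf hfk
  rw [← Int.le_floor, floor_eq] at hm
  rw [← Int.floor_lt, floor_eq] at hn
  exact Finset.mem_Ico.mpr ⟨hm, hn⟩

end IntegerTranslates

theorem support_phi_subset : Function.support phi ⊆ Set.Ico (-3) 3 := by
  intro x hx
  by_contra hout
  refine hx ?_
  unfold phi
  repeat rw [if_neg fun h => hout ⟨by linarith [h.1], by linarith [h.2]⟩]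

section Pieces

variable {r : ℝ}

theorem phi_sub_three_eq_pm3 (hr : r ∈ Set.Ico 0 1) : phi (r - 3) = pm3 r := by
  grind [phi]

theorem phi_sub_two_eq_pm2 (hr : r ∈ Set.Ico 0 1) : phi (r - 2) = pm2 r := by
  grind [phi]

theorem phi_sub_one_eq_pm1 (hr : r ∈ Set.Ico 0 1) : phi (r - 1) = pm1 r := by
  grind [phi]

theorem phi_eq_p0 (hr : r ∈ Set.Ico 0 1) : phi r = p0 r := by
  grind [phi]

theorem phi_add_one_eq_p1 (hr : r ∈ Set.Ico 0 1) : phi (r + 1) = p1 r := by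
  grind [phi]

theorem phi_add_two_eq_p2 (hr : r ∈ Set.Ico 0 1) : phi (r + 2) = p2 r := by
  grind [phi]

end Pieces

theorem hasSum_mul_phi (g : ℝ → ℝ) (x : ℝ) :
    HasSum (fun j : ℤ => g (x - j) * phi (x - j))
      (g (fract x - 3) * pm3 (fract x) + g (fract x - 2) * pm2 (fract x)
        + g (fract x - 1) * pm1 (fract x) + g (fract x) * p0 (fract x)
        + g (fract x + 1) * p1 (fract x) + g (fract x + 2) * p2 (fract x)) := by
  have hr : fract x ∈ Set.Ico 0 1 := ⟨fract_nonneg x, fract_lt_one x⟩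
  have support_subset : Function.support (g * phi) ⊆ Set.Ico ((-3 : ℤ) : ℝ) (3 : ℤ) := by
    push_cast
    exact (Function.support_mul_subset_right g phi).trans support_phi_subset
  have Ico_eq : Finset.Ico (-3 : ℤ) 3 = {-3, -2, -1, 0, 1, 2} := rfl
  simpa [Ico_eq, ← sub_eq_add_neg, add_assoc, phi_sub_three_eq_pm3 hr, phi_sub_two_eq_pm2 hr,
    phi_sub_one_eq_pm1 hr, phi_eq_p0 hr, phi_add_one_eq_p1 hr, phi_add_two_eq_p2 hr]
    using hasSum_sub_intCast_of_support_subset_Ico support_subset x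

theorem second_moment_pieces_eq_K (r : ℝ) :
    (r - 3) ^ 2 * pm3 r + (r - 2) ^ 2 * pm2 r + (r - 1) ^ 2 * pm1 r + r ^ 2 * p0 r
      + (r + 1) ^ 2 * p1 r + (r + 2) ^ 2 * p2 r = K := by
  have pm3_coeff_eq_zero : (r - 3) ^ 2 - 3 * (r - 2) ^ 2 + 2 * (r - 1) ^ 2 + 2 * r ^ 2
      - 3 * (r + 1) ^ 2 + (r + 2) ^ 2 = 0 := by ring
  calc
    _ = ((r - 3) ^ 2 - 3 * (r - 2) ^ 2 + 2 * (r - 1) ^ 2 + 2 * r ^ 2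
          - 3 * (r + 1) ^ 2 + (r + 2) ^ 2) * pm3 r + K := by
      unfold pm2 pm1 p0 p1 p2
      ring
    _ = K := by rw [pm3_coeff_eq_zero, zero_mul, zero_add]

/-- Second moment condition with constant `K = 59/60 − √29/20`. -/
theorem new6pt_second_moment (x : ℝ) :
    ∑' j : ℤ, (x - j) ^ 2 * phi (x - j) = 59 / 60 - Real.sqrt 29 / 20 := by
  rw [(hasSum_mul_phi (· ^ 2) x).tsum_eq]
  exact second_moment_pieces_eq_K (fract x)

end IB6
end
end
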